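/- (Rational Hankel determinant solutions) Define polynomials a_n (n ≥ 0) in z by a_0 = z and a_n = a_{n−1}' + Σ_{k=0}^{n−2} a_k·a_{n−k−2} for n ≥ 1 (the sum is empty for n = 1), and for N ≥ 0 let κ_N = det(a_{i+j−2})_{1≤i,j≤N} (κ_0 = 1). Then on any open interval I ⊆ ℝ on which κ_N and κ_{N+1} are nowhere zero, u = (log(κ_{N+1}/κ_N))' = κ_{N+1}'/κ_{N+1} − κ_N'/κ_N is a solution of P_II[N + 1/2], and W = 2z + 2(log κ_N)'' = 2z + 2(κ_N''·κ_N − (κ_N')²)/κ_N² is a solution of P_XXXIV[N + 1/2]. -/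

import Mathlib

/-!
The generating function of `a_n` solves a Riccati equation. Differentiating an entry of the Hankel
matrix `(a_{i+j})` therefore shifts its row label, up to a strictly triangular combination of rows,
which does not change the determinant, and a combination of columns, most of which repeat an
existing one. So `κ'` and `κ''` are again minors of the infinite Hankel matrix, and the
Desnanot–Jacobi identity between these minors is the Toda equation

  `κ_{N+1} κ_{N-1} = κ_N κ_N'' - (κ_N')² + z κ_N²`.

By induction along the Toda equation, `κ_{N+1}`, `κ_N`, `κ_{N-1}` satisfy Hirota's bilinear
equations `D² κ_{N+1} · κ_N = 0` and `D κ_{N+1} · κ_{N-1} = (2N + 1) κ_N²`. Dividing the first by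
`κ_{N+1} κ_N` and the second by `κ_N²` turns them into the first-order system
`u' = 2z - W - u²`, `W' = 2uW - 4(N + 1/2)`; eliminating `W` gives P_II and eliminating `u` gives
P_XXXIV.
-/

open Polynomial Matrix Filter Topology

section Jacobi

variable {R : Type*} [CommRing R] {n : Type*} [Fintype n] [DecidableEq n]

theorem derivation_prod {S ι : Type*} [CommSemiring S] [Algebra S R] [DecidableEq ι]
    (δ : Derivation S R R) (s : Finset ι) (f : ι → R) :
    δ (∏ i ∈ s, f i) = ∑ i ∈ s, (∏ j ∈ s.erase i, f j) * δ (f i) := by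
  induction s using Finset.induction_on with
  | empty => simp
  | insert a s ha ih =>
    rw [Finset.prod_insert ha, Derivation.leibniz, ih, Finset.sum_insert ha,
      Finset.erase_insert ha, smul_eq_mul, smul_eq_mul, add_comm, Finset.mul_sum]
    congr 1
    refine Finset.sum_congr rfl fun i hi => ?_
    rw [Finset.erase_insert_of_ne (ne_of_mem_of_not_mem hi ha).symm,
      Finset.prod_insert fun h => ha (Finset.mem_of_mem_erase h), mul_assoc]

theorem trace_adjugate_mul_eq_sum_det_updateCol (A B : Matrix n n R) :
    (A.adjugate * B).trace = ∑ j, (A.updateCol j (B.col j)).det := by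
  simp only [← cramer_apply, cramer_eq_adjugate_mulVec]
  rfl

theorem trace_adjugate_mul_eq_sum_det_updateRow (A B : Matrix n n R) :
    (A.adjugate * B).trace = ∑ i, (A.updateRow i (B.row i)).det := by
  rw [← trace_transpose, transpose_mul, trace_mul_comm, adjugate_transpose,
    trace_adjugate_mul_eq_sum_det_updateCol]
  refine Finset.sum_congr rfl fun i _ => ?_
  rw [updateCol_transpose, det_transpose]
  rfl

theorem derivation_det {S : Type*} [CommSemiring S] [Algebra S R] (δ : Derivation S R R)
    (A : Matrix n n R) : δ A.det = (A.adjugate * A.map δ).trace := by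
  rw [trace_adjugate_mul_eq_sum_det_updateCol]
  simp only [det_apply, map_sum, Units.smul_def, map_zsmul, derivation_prod, Finset.smul_sum]
  rw [Finset.sum_comm]
  refine Finset.sum_congr rfl fun j _ => Finset.sum_congr rfl fun σ _ => ?_
  rw [← Finset.prod_erase_mul Finset.univ _ (Finset.mem_univ j), updateCol_self]
  congr 2
  refine Finset.prod_congr rfl fun k hk => ?_
  rw [updateCol_ne (Finset.ne_of_mem_erase hk)]

theorem trace_adjugate_mul_mul_self (A B : Matrix n n R) :
    (A.adjugate * (B * A)).trace = A.det * B.trace := by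
  rw [trace_mul_comm, Matrix.mul_assoc, mul_adjugate, Matrix.mul_smul, Matrix.mul_one,
    trace_smul, smul_eq_mul]

end Jacobi

section Sylvester

variable {R : Type*} [CommRing R] {m n : Type*} [Fintype m] [DecidableEq m]

/-- The minor of a block matrix on the rows of its first block and row `i` of the second, and the
columns of its first block and column `j` of the second. These are the entries of the matrix in
Sylvester's determinant identity. -/
def borderedMinor (M : Matrix (m ⊕ n) (m ⊕ n) R) (i j : n) : R :=
  (M.submatrix (Sum.map id fun _ : Fin 1 => i) (Sum.map id fun _ : Fin 1 => j)).det

theorem map_borderedMinor {S : Type*} [CommRing S] (f : R →+* S) (M : Matrix (m ⊕ n) (m ⊕ n) R)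
    (i j : n) : f (borderedMinor M i j) = borderedMinor (M.map f) i j :=
  RingHom.map_det _ _

variable [Fintype n] [DecidableEq n]

theorem det_fromBlocks_mul_det_pow (A : Matrix m m R) (B : Matrix m n R) (C : Matrix n m R)
    (E : Matrix n n R) :
    (fromBlocks A B C E).det * A.det ^ Fintype.card n =
      A.det * (A.det • E - C * A.adjugate * B).det := by
  have factorization : fromBlocks A B C E * fromBlocks 1 (-(A.adjugate * B)) 0 (A.det • 1) =
      fromBlocks A 0 C (A.det • E - C * A.adjugate * B) := by
    rw [fromBlocks_multiply]
    congr 1 <;> simp [← Matrix.mul_assoc, mul_adjugate, sub_eq_neg_add]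
  simpa [det_mul, det_fromBlocks_zero₂₁, det_fromBlocks_zero₁₂, det_smul] using
    congrArg det factorization

theorem det_borderedMinor_of_isRegular [Nonempty n] (M : Matrix (m ⊕ n) (m ⊕ n) R)
    (hM : IsRegular M.toBlocks₁₁.det) :
    (of (borderedMinor M)).det = M.toBlocks₁₁.det ^ (Fintype.card n - 1) * M.det := by
  set A := M.toBlocks₁₁
  have schur (i j : n) : borderedMinor M i j =
      (A.det • M.toBlocks₂₂ - M.toBlocks₂₁ * A.adjugate * M.toBlocks₁₂) i j := by
    have h := det_fromBlocks_mul_det_pow A (M.toBlocks₁₂.submatrix id fun _ : Fin 1 => j)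
      (M.toBlocks₂₁.submatrix (fun _ : Fin 1 => i) id)
      (M.toBlocks₂₂.submatrix (fun _ : Fin 1 => i) fun _ : Fin 1 => j)
    rw [Fintype.card_fin, pow_one, mul_comm] at h
    rw [borderedMinor, ← fromBlocks_toBlocks (M.submatrix _ _)]
    refine (hM.left h).trans ?_
    rw [det_fin_one]
    rfl
  have h := det_fromBlocks_mul_det_pow A M.toBlocks₁₂ M.toBlocks₂₁ M.toBlocks₂₂
  rw [fromBlocks_toBlocks, ← Nat.succ_pred_eq_of_pos Fintype.card_pos, pow_succ', mul_left_comm,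
    ← Matrix.ext schur] at h
  rw [mul_comm (_ ^ _)]
  exact (hM.left h).symm

/-- **Sylvester's determinant identity**; for `card n = 2` it is the Desnanot–Jacobi identity. -/
theorem det_borderedMinor [Nonempty n] (M : Matrix (m ⊕ n) (m ⊕ n) R) :
    (of (borderedMinor M)).det = M.toBlocks₁₁.det ^ (Fintype.card n - 1) * M.det := by
  -- The determinant of the leading block of `M + X • 1` is monic, hence cancellable; then `X = 0`.
  let M' : Matrix (m ⊕ n) (m ⊕ n) R[X] := (X : R[X]) • 1 + M.map C
  have block : M'.toBlocks₁₁ = (X : R[X]) • 1 + M.toBlocks₁₁.map C := by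
    ext1 i j
    simp [M', toBlocks₁₁, one_apply]
  have monic : M'.toBlocks₁₁.det.Monic := by
    rw [block]
    exact leadingCoeff_det_X_one_add_C _
  have eval_zero : M'.map (evalRingHom 0) = M := by
    ext1 i j
    simp [M']
  have minors : (of (borderedMinor M')).map (evalRingHom 0) = of (borderedMinor M) := by
    ext1 i j
    rw [map_apply, of_apply, map_borderedMinor, eval_zero, of_apply]
  have h := congrArg (evalRingHom 0) (det_borderedMinor_of_isRegular M' monic.isRegular)
  rw [map_mul, map_pow] at h
  simp only [RingHom.map_det, RingHom.mapMatrix_apply, minors, eval_zero] at h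
  rw [h, ← eval_zero]
  rfl

end Sylvester

section Hankel

variable {R m n : Type*}

/-- The submatrix of the infinite Hankel matrix `(p (i + j))` with row labels `r` and column
labels `c`. -/
def hankel (p : ℕ → R) (r : m → ℕ) (c : n → ℕ) : Matrix m n R :=
  of fun i j => p (r i + c j)

theorem hankel_transpose (p : ℕ → R) (r : m → ℕ) (c : n → ℕ) :
    (hankel p r c)ᵀ = hankel p c r := by
  ext1 i j
  exact congrArg p (add_comm _ _)

theorem hankel_updateRow [DecidableEq m] (p : ℕ → R) (r : m → ℕ) (c : n → ℕ) (i : m) (a : ℕ) :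
    (hankel p r c).updateRow i (fun j => p (a + c j)) = hankel p (Function.update r i a) c := by
  ext1 k j
  obtain rfl | hk := eq_or_ne k i
  · simp [hankel]
  · simp [hankel, hk]

theorem hankel_updateCol [DecidableEq n] (p : ℕ → R) (r : m → ℕ) (c : n → ℕ) (j : n) (b : ℕ) :
    (hankel p r c).updateCol j (fun i => p (r i + b)) = hankel p r (Function.update c j b) := by
  rw [← transpose_inj, ← updateRow_transpose, hankel_transpose, hankel_transpose,
    ← hankel_updateRow]
  simp only [add_comm]

variable [CommRing R]

theorem det_hankel_comm [Fintype n] [DecidableEq n] (p : ℕ → R) (r c : n → ℕ) :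
    (hankel p r c).det = (hankel p c r).det := by
  rw [← det_transpose, hankel_transpose]

theorem det_hankel_eq_zero_of_row_eq [Fintype n] [DecidableEq n] (p : ℕ → R) {r : n → ℕ}
    (c : n → ℕ) {i j : n} (hij : i ≠ j) (hr : r i = r j) : (hankel p r c).det = 0 :=
  det_zero_of_row_eq hij (by ext1 k; simp [hankel, hr])

theorem det_hankel_comp_equiv [Fintype m] [DecidableEq m] [Fintype n] [DecidableEq n]
    (p : ℕ → R) (r c : n → ℕ) (e : m ≃ n) : (hankel p (r ∘ e) (c ∘ e)).det = (hankel p r c).det :=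
  det_submatrix_equiv_self e (hankel p r c)

theorem det_hankel_updateCol_sum [Fintype n] [DecidableEq n] (p : ℕ → R) (r c : n → ℕ) (j : n)
    (s : Finset ℕ) (w : ℕ → R) :
    ((hankel p r c).updateCol j fun i => ∑ k ∈ s, w k * p (r i + k)).det =
      ∑ k ∈ s, w k * (hankel p r (Function.update c j k)).det := by
  have combination :
      (fun i => ∑ k ∈ s, w k * p (r i + k)) = ∑ k ∈ s, w k • fun i => p (r i + k) := by
    ext1 i
    simp
  simp only [combination, ← cramer_apply, map_sum, map_smul, Finset.sum_apply, Pi.smul_apply,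
    smul_eq_mul, ← hankel_updateCol]

/-- The `n`-th Hankel determinant `det (p (i + j))`, `0 ≤ i, j < n`. -/
def hankelDet (p : ℕ → R) (n : ℕ) : R :=
  (hankel p (Fin.val : Fin n → ℕ) Fin.val).det

/-- The minor of the infinite Hankel matrix `(p (i + j))` on the rows `0, …, n - 1, a` and the
columns `0, …, n - 1, b`. -/
def borderedHankelDet (p : ℕ → R) (n a b : ℕ) : R :=
  (hankel p (Function.update (Fin.val : Fin (n + 1) → ℕ) (Fin.last n) a)
    (Function.update (Fin.val : Fin (n + 1) → ℕ) (Fin.last n) b)).det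

theorem map_hankelDet {S : Type*} [CommRing S] (f : R →+* S) (p : ℕ → R) (n : ℕ) :
    f (hankelDet p n) = hankelDet (fun k => f (p k)) n :=
  RingHom.map_det _ _

theorem update_val_last (n : ℕ) :
    Function.update (Fin.val : Fin (n + 1) → ℕ) (Fin.last n) n = Fin.val :=
  Function.update_eq_self (Fin.last n) Fin.val

theorem borderedHankelDet_self (p : ℕ → R) (n : ℕ) :
    borderedHankelDet p n n n = hankelDet p (n + 1) := by
  rw [borderedHankelDet, update_val_last, hankelDet]

theorem borderedHankelDet_comm (p : ℕ → R) (n a b : ℕ) :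
    borderedHankelDet p n a b = borderedHankelDet p n b a :=
  det_hankel_comm _ _ _

theorem borderedHankelDet_eq_zero_of_lt (p : ℕ → R) {n a : ℕ} (b : ℕ) (h : a < n) :
    borderedHankelDet p n a b = 0 := by
  have hne : (⟨a, h.trans n.lt_succ_self⟩ : Fin (n + 1)) ≠ Fin.last n :=
    Fin.ne_of_val_ne h.ne
  exact det_hankel_eq_zero_of_row_eq p _ hne (by simp [Function.update_of_ne hne])

theorem borderedMinor_hankel (p : ℕ → R) (n : ℕ) {k : ℕ} (s : Fin k → ℕ) (i j : Fin k) :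
    borderedMinor (hankel p (Sum.elim (Fin.val : Fin n → ℕ) s) (Sum.elim Fin.val s)) i j =
      borderedHankelDet p n (s i) (s j) := by
  have labels (a : ℕ) : Function.update (Fin.val : Fin (n + 1) → ℕ) (Fin.last n) a ∘
      finSumFinEquiv = Sum.elim Fin.val fun _ : Fin 1 => a := by
    funext x
    rcases x with x | x
    · exact Function.update_of_ne (Fin.castSucc_ne_last x) _ _
    · rw [Fin.fin_one_eq_zero x]
      exact Function.update_self _ _ _
  rw [borderedHankelDet, ← det_hankel_comp_equiv p _ _ finSumFinEquiv, labels, labels,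
    borderedMinor]
  congr 1
  ext1 x y
  rcases x with x | x <;> rcases y with y | y <;> rfl

theorem hankelDet_mul_hankelDet (p : ℕ → R) (n : ℕ) :
    hankelDet p (n + 2) * hankelDet p n =
      hankelDet p (n + 1) * borderedHankelDet p n (n + 1) (n + 1) -
        borderedHankelDet p n n (n + 1) ^ 2 := by
  have labels : (Fin.val : Fin (n + 2) → ℕ) ∘ finSumFinEquiv =
      Sum.elim Fin.val fun i : Fin 2 => n + i := by
    funext x
    rcases x with x | x <;> simp
  have h := det_borderedMinor
    (hankel p (Sum.elim (Fin.val : Fin n → ℕ) fun i : Fin 2 => n + i)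
      (Sum.elim Fin.val fun i : Fin 2 => n + i))
  rw [← labels, det_hankel_comp_equiv, labels, det_fin_two] at h
  simp only [of_apply, borderedMinor_hankel, Fintype.card_fin, Fin.val_zero, Fin.val_one,
    add_zero, borderedHankelDet_self, borderedHankelDet_comm p n (n + 1) n] at h
  rw [pow_two, h, pow_one, mul_comm]
  rfl

end Hankel

section Riccati

variable {S R : Type*} [CommSemiring S] [CommRing R] [Algebra S R] {δ : Derivation S R R}
  {p : ℕ → R}

/-- The recurrence `p (n + 1) = δ (p n) + ∑ p k * p (n - 1 - k)` over `k < n`. It says that the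
generating function `F = ∑ p n tⁿ` solves the Riccati equation `F = p 0 + t δ F + t² F²`. -/
def IsRiccatiSeq (δ : Derivation S R R) (p : ℕ → R) : Prop :=
  ∀ n, p (n + 1) = δ (p n) + ∑ k ∈ Finset.range n, p k * p (n - 1 - k)

/-- The strictly lower triangular Toeplitz matrix with entries `p (i - 1 - j)`. -/
def strictLowerToeplitz (p : ℕ → R) (n : ℕ) : Matrix (Fin n) (Fin n) R :=
  of fun i j => if j < i then p (i - 1 - j) else 0

theorem trace_strictLowerToeplitz (p : ℕ → R) (n : ℕ) : (strictLowerToeplitz p n).trace = 0 := by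
  simp [trace, strictLowerToeplitz]

theorem strictLowerToeplitz_mul_hankel_apply {ι : Type*} (p : ℕ → R) {n : ℕ} (c : ι → ℕ)
    (i : Fin n) (j : ι) :
    (strictLowerToeplitz p n * hankel p (Fin.val : Fin n → ℕ) c) i j =
      ∑ k ∈ Finset.range i, p (i - 1 - k) * p (k + c j) := by
  simp only [mul_apply, strictLowerToeplitz, hankel, of_apply, ite_mul, zero_mul, Fin.lt_def]
  rw [Fin.sum_univ_eq_sum_range
      (fun k => if k < (i : ℕ) then p (i - 1 - k) * p (k + c j) else 0),
    ← Finset.sum_filter]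
  refine Finset.sum_congr (Finset.ext fun k => ?_) fun _ _ => rfl
  simp only [Finset.mem_filter, Finset.mem_range]
  omega

theorem IsRiccatiSeq.derivation_apply_add (hp : IsRiccatiSeq δ p) (i j : ℕ) :
    δ (p (i + j)) = p (i + 1 + j) - ∑ k ∈ Finset.range i, p (i - 1 - k) * p (k + j) -
      ∑ k ∈ Finset.range j, p (j - 1 - k) * p (i + k) := by
  have left : ∑ k ∈ Finset.range i, p k * p (i + j - 1 - k) =
      ∑ k ∈ Finset.range i, p (i - 1 - k) * p (k + j) := by
    rw [← Finset.sum_range_reflect]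
    refine Finset.sum_congr rfl fun k hk => ?_
    have := Finset.mem_range.1 hk
    congr 2
    omega
  have right : ∑ k ∈ Finset.range j, p (i + k) * p (i + j - 1 - (i + k)) =
      ∑ k ∈ Finset.range j, p (j - 1 - k) * p (i + k) := by
    refine Finset.sum_congr rfl fun k _ => ?_
    rw [mul_comm]
    congr 2
    omega
  rw [add_right_comm, hp, Finset.sum_range_add, left, right]
  ring

theorem IsRiccatiSeq.hankel_map_derivation (hp : IsRiccatiSeq δ p) {ι : Type*} {n : ℕ}
    (c : ι → ℕ) :
    (hankel p (Fin.val : Fin n → ℕ) c).map δ =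
      hankel p (fun i : Fin n => i + 1) c -
          strictLowerToeplitz p n * hankel p (Fin.val : Fin n → ℕ) c -
        of fun (i : Fin n) j => ∑ k ∈ Finset.range (c j), p (c j - 1 - k) * p (i + k) := by
  ext1 i j
  rw [Matrix.sub_apply, Matrix.sub_apply, strictLowerToeplitz_mul_hankel_apply]
  exact hp.derivation_apply_add i (c j)

theorem trace_adjugate_mul_hankel_succ (p : ℕ → R) (n : ℕ) (c : Fin (n + 1) → ℕ) :
    ((hankel p (Fin.val : Fin (n + 1) → ℕ) c).adjugate *
        hankel p (fun i : Fin (n + 1) => i + 1) c).trace =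
      (hankel p (Function.update Fin.val (Fin.last n) (n + 1)) c).det := by
  have shift (i : Fin (n + 1)) :
      (hankel p Fin.val c).updateRow i ((hankel p (fun i : Fin (n + 1) => i + 1) c).row i) =
        hankel p (Function.update Fin.val i (i + 1)) c :=
    hankel_updateRow p Fin.val c i (i + 1)
  simp only [trace_adjugate_mul_eq_sum_det_updateRow, shift]
  refine Finset.sum_eq_single (Fin.last n) (fun i _ hi => ?_) (by simp)
  obtain ⟨i, rfl⟩ := Fin.exists_castSucc_eq.2 hi
  have hne : i.castSucc ≠ i.succ := Fin.castSucc_lt_succ.ne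
  exact det_hankel_eq_zero_of_row_eq p c hne (by simp [Function.update_of_ne hne.symm])

theorem trace_adjugate_mul_hankel_sum (p : ℕ → R) (n b : ℕ) (w : ℕ → ℕ → R) :
    let c := Function.update (Fin.val : Fin (n + 1) → ℕ) (Fin.last n) b
    ((hankel p (Fin.val : Fin (n + 1) → ℕ) c).adjugate *
      of fun (i : Fin (n + 1)) j => ∑ k ∈ Finset.range (c j), w (c j) k * p (i + k)).trace =
      ∑ k ∈ Finset.range b, w b k * borderedHankelDet p n n k := by
  intro c
  rw [trace_adjugate_mul_eq_sum_det_updateCol]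
  refine (Finset.sum_congr rfl fun j _ =>
    det_hankel_updateCol_sum p Fin.val c j (Finset.range (c j)) (w (c j))).trans ?_
  rw [Finset.sum_eq_single (Fin.last n)]
  · simp only [c, Function.update_self, Function.update_idem, borderedHankelDet, update_val_last]
  · intro j _ hj
    refine Finset.sum_eq_zero fun k hk => ?_
    rw [Finset.mem_range, show c j = j from Function.update_of_ne hj _ _] at hk
    have hkj : (⟨k, hk.trans j.2⟩ : Fin (n + 1)) ≠ j := Fin.ne_of_val_ne hk.ne
    have hkn : (⟨k, hk.trans j.2⟩ : Fin (n + 1)) ≠ Fin.last n :=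
      Fin.ne_of_val_ne (hk.trans_le j.le_last).ne
    rw [det_hankel_comm, det_hankel_eq_zero_of_row_eq p _ hkj, mul_zero]
    rw [Function.update_of_ne hkj, Function.update_self]
    exact Function.update_of_ne hkn _ _
  · simp

theorem IsRiccatiSeq.derivation_borderedHankelDet (hp : IsRiccatiSeq δ p) (n b : ℕ) :
    δ (borderedHankelDet p n n b) = borderedHankelDet p n (n + 1) b -
      ∑ k ∈ Finset.range b, p (b - 1 - k) * borderedHankelDet p n n k := by
  rw [borderedHankelDet, update_val_last, derivation_det, hp.hankel_map_derivation, Matrix.mul_sub,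
    Matrix.mul_sub, trace_sub, trace_sub, trace_adjugate_mul_mul_self, trace_strictLowerToeplitz,
    mul_zero, sub_zero, trace_adjugate_mul_hankel_succ, borderedHankelDet,
    trace_adjugate_mul_hankel_sum p n b fun b k => p (b - 1 - k)]

theorem IsRiccatiSeq.derivation_hankelDet_succ (hp : IsRiccatiSeq δ p) (n : ℕ) :
    δ (hankelDet p (n + 1)) = borderedHankelDet p n n (n + 1) := by
  rw [← borderedHankelDet_self, hp.derivation_borderedHankelDet, Finset.sum_eq_zero, sub_zero,
    borderedHankelDet_comm]
  intro k hk
  rw [borderedHankelDet_comm, borderedHankelDet_eq_zero_of_lt p n (Finset.mem_range.1 hk), mul_zero]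

theorem IsRiccatiSeq.derivation_derivation_hankelDet_succ (hp : IsRiccatiSeq δ p) (n : ℕ) :
    δ (δ (hankelDet p (n + 1))) =
      borderedHankelDet p n (n + 1) (n + 1) - p 0 * hankelDet p (n + 1) := by
  rw [hp.derivation_hankelDet_succ, hp.derivation_borderedHankelDet, Finset.sum_range_succ,
    Finset.sum_eq_zero, zero_add, borderedHankelDet_self, Nat.add_sub_cancel, Nat.sub_self]
  intro k hk
  rw [borderedHankelDet_comm, borderedHankelDet_eq_zero_of_lt p n (Finset.mem_range.1 hk), mul_zero]

theorem IsRiccatiSeq.toda (hp : IsRiccatiSeq δ p) (n : ℕ) :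
    hankelDet p (n + 2) * hankelDet p n = δ (δ (hankelDet p (n + 1))) * hankelDet p (n + 1) -
      δ (hankelDet p (n + 1)) ^ 2 + p 0 * hankelDet p (n + 1) ^ 2 := by
  rw [hankelDet_mul_hankelDet, hp.derivation_derivation_hankelDet_succ,
    hp.derivation_hankelDet_succ]
  ring

end Riccati

section TodaChain

variable {S R : Type*} [CommSemiring S] [CommRing R] [Algebra S R]

/-- Hirota's bilinear operator `D f · g = f' g - f g'`. -/
def hirota (δ : Derivation S R R) (f g : R) : R :=
  δ f * g - f * δ g

/-- Hirota's bilinear operator `D² f · g = f'' g - 2 f' g' + f g''`. -/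
def hirotaSq (δ : Derivation S R R) (f g : R) : R :=
  δ (δ f) * g - 2 * (δ f * δ g) + f * δ (δ g)

/-- A solution of the Toda equation with potential `x`, starting from `1, 1`. -/
structure IsTodaChain (δ : Derivation S R R) (x : R) (τ : ℕ → R) : Prop where
  zero : τ 0 = 1
  one : τ 1 = 1
  toda (n : ℕ) : τ (n + 2) * τ n =
    δ (δ (τ (n + 1))) * τ (n + 1) - δ (τ (n + 1)) ^ 2 + x * τ (n + 1) ^ 2

/-- The Hankel determinants with a `1` prepended, which plays the role of the determinant of
size `-1` in the Toda equation. -/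
def hankelChain (p : ℕ → R) : ℕ → R
  | 0 => 1
  | n + 1 => hankelDet p n

theorem IsRiccatiSeq.isTodaChain {δ : Derivation S R R} {p : ℕ → R} (hp : IsRiccatiSeq δ p) :
    IsTodaChain δ (p 0) (hankelChain p) where
  zero := rfl
  one := det_isEmpty
  toda
    | 0 => by simp [hankelChain, hankelDet, hankel]
    | n + 1 => hp.toda n

variable [IsDomain R] {δ : Derivation S R R} {x c h g f k : R}

-- With `u = (log (f / g))'`, `w = 2 h f / g²` and `w⁺ = 2 g k / f²`, the hypotheses say that
-- `u' = 2 x - w - u²` and `w' = 2 u w - 2 c`, and the two Toda equations that `w⁺ = w + 2 u'`.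
-- Hence `w⁺' = -2 u w⁺ + 2 (c + 2)`, which is the conclusion.
theorem hirota_eq_of_toda (hx : δ x = 1) (hg : g ≠ 0)
    (toda_g : f * h = δ (δ g) * g - δ g ^ 2 + x * g ^ 2)
    (toda_f : k * g = δ (δ f) * f - δ f ^ 2 + x * f ^ 2)
    (hfg : hirotaSq δ f g = 0) (hfh : hirota δ f h = c * g ^ 2) :
    hirota δ k g = (c + 2) * f ^ 2 := by
  have toda_g' := congrArg δ toda_g
  have toda_f' := congrArg δ toda_f
  have hfg' := congrArg δ hfg
  rw [hirota] at hfh ⊢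
  rw [hirotaSq] at hfg hfg'
  have hδ2 : δ 2 = 0 := δ.map_natCast 2
  simp only [map_add, map_sub, map_zero, Derivation.leibniz, Derivation.leibniz_pow, smul_eq_mul,
    nsmul_eq_mul, Nat.cast_ofNat, Nat.add_one_sub_one, pow_one, hx, hδ2]
    at toda_g' toda_f' hfg'
  refine mul_left_cancel₀ (pow_ne_zero 2 hg) ?_
  linear_combination g ^ 2 * toda_f' - 2 * g * δ g * toda_f + f * g * hfg' -
    (g * δ f + f * δ g) * hfg + f ^ 2 * hfh + f ^ 2 * toda_g' - 2 * f * δ f * toda_g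

theorem hirotaSq_eq_zero_of_hirota (hc : δ c = 0) (hg : g ≠ 0) (hfg : hirotaSq δ f g = 0)
    (hkg : hirota δ k g = c * f ^ 2) : hirotaSq δ k f = 0 := by
  have hkg' := congrArg δ hkg
  rw [hirotaSq] at hfg ⊢
  rw [hirota] at hkg hkg'
  simp only [map_sub, Derivation.leibniz, Derivation.leibniz_pow, smul_eq_mul, nsmul_eq_mul,
    Nat.cast_ofNat, Nat.add_one_sub_one, pow_one, hc] at hkg'
  refine mul_left_cancel₀ hg ?_
  linear_combination f * hkg' - 2 * δ f * hkg + k * hfg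

theorem IsTodaChain.hirota_equations [CharZero R] {τ : ℕ → R} (hτ : IsTodaChain δ x τ)
    (hx : δ x = 1) (n : ℕ) :
    τ (n + 1) ≠ 0 ∧ hirotaSq δ (τ (n + 2)) (τ (n + 1)) = 0 ∧
      hirota δ (τ (n + 2)) (τ n) = (2 * n + 1) * τ (n + 1) ^ 2 := by
  induction n with
  | zero =>
    have two : τ 2 = x := by simpa [hτ.zero, hτ.one] using hτ.toda 0
    simp [hirota, hirotaSq, hτ.zero, hτ.one, two, hx]
  | succ n ih =>
    obtain ⟨hne, hsq, hone⟩ := ih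
    have odd_ne : (2 * n + 1 : R) ≠ 0 := by exact_mod_cast (2 * n).succ_ne_zero
    have const : δ (2 * n + 1 + 2) = 0 := by
      exact_mod_cast δ.map_natCast (2 * n + 1 + 2)
    have next := hirota_eq_of_toda hx hne (hτ.toda n) (hτ.toda (n + 1)) hsq hone
    refine ⟨fun h => ?_, hirotaSq_eq_zero_of_hirota const hne hsq next, next.trans ?_⟩
    · rw [h] at hone
      exact mul_ne_zero odd_ne (pow_ne_zero 2 hne) (by simpa [hirota] using hone.symm)
    · push_cast
      ring

end TodaChain

section Painleve

variable {𝕜 : Type*} [NontriviallyNormedField 𝕜]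

/-- The Hamiltonian system `u' = 2z - w - u²`, `w' = 2uw - 4α` at the point `z`. Eliminating `w`
gives P_II[α] for `u`, and eliminating `u` gives P_XXXIV[α] for `w`. -/
structure SolvesHamiltonianSystemAt (α : 𝕜) (u w : 𝕜 → 𝕜) (z : 𝕜) : Prop where
  hasDerivAt_left : HasDerivAt u (2 * z - w z - u z ^ 2) z
  hasDerivAt_right : HasDerivAt w (2 * (u z * w z) - 4 * α) z

theorem painleveII_of_hamiltonianSystem {α : 𝕜} {u w : 𝕜 → 𝕜} {z : 𝕜}
    (h : ∀ᶠ y in 𝓝 z, SolvesHamiltonianSystemAt α u w y) :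
    deriv (deriv u) z = 2 * u z ^ 3 - 4 * z * u z + (4 * α + 2) := by
  obtain ⟨hu, hw⟩ := h.self_of_nhds
  have deriv_u : deriv u =ᶠ[𝓝 z] fun y => 2 * y - w y - u y ^ 2 :=
    h.mono fun y hy => hy.hasDerivAt_left.deriv
  have deriv_rhs := (((hasDerivAt_id' z).const_mul 2).fun_sub hw).fun_sub (hu.fun_pow 2)
  rw [deriv_u.deriv_eq, deriv_rhs.deriv]
  push_cast
  ring

theorem painleveXXXIV_of_hamiltonianSystem {α : 𝕜} {u w : 𝕜 → 𝕜} {z : 𝕜}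
    (h : ∀ᶠ y in 𝓝 z, SolvesHamiltonianSystemAt α u w y) :
    2 * w z * deriv (deriv w) z - deriv w z ^ 2 + 4 * w z ^ 3 - 8 * z * w z ^ 2 + 16 * α ^ 2 =
      0 := by
  obtain ⟨hu, hw⟩ := h.self_of_nhds
  have deriv_w : deriv w =ᶠ[𝓝 z] fun y => 2 * (u y * w y) - 4 * α :=
    h.mono fun y hy => hy.hasDerivAt_right.deriv
  have deriv_rhs := ((hu.fun_mul hw).const_mul 2).sub_const (4 * α)
  rw [deriv_w.deriv_eq, deriv_rhs.deriv, hw.deriv]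
  ring

theorem hasDerivAt_logDeriv_sub_logDeriv {f f' g g' : 𝕜 → 𝕜} {f'' g'' z : 𝕜}
    (hf : HasDerivAt f (f' z) z) (hf' : HasDerivAt f' f'' z)
    (hg : HasDerivAt g (g' z) z) (hg' : HasDerivAt g' g'' z) (hfz : f z ≠ 0) (hgz : g z ≠ 0)
    (hfg : f'' * g z - 2 * (f' z * g' z) + f z * g'' = 0) :
    HasDerivAt (fun y => f' y / f y - g' y / g y)
      (-(2 * (g'' * g z - g' z ^ 2) / g z ^ 2) - (f' z / f z - g' z / g z) ^ 2) z := by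
  refine ((hf'.fun_div hf hfz).fun_sub (hg'.fun_div hg hgz)).congr_deriv ?_
  field_simp
  linear_combination f z * g z * hfg

theorem hasDerivAt_mul_div_sq {f g h : 𝕜 → 𝕜} {f' g' h' c z : 𝕜}
    (hf : HasDerivAt f f' z) (hg : HasDerivAt g g' z) (hh : HasDerivAt h h' z)
    (hfz : f z ≠ 0) (hgz : g z ≠ 0) (hfh : f' * h z - f z * h' = c * g z ^ 2) :
    HasDerivAt (fun y => f y * h y / g y ^ 2)
      (2 * ((f' / f z - g' / g z) * (f z * h z / g z ^ 2)) - c) z := by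
  refine ((hf.fun_mul hh).fun_div (hg.fun_pow 2) (pow_ne_zero 2 hgz)).congr_deriv ?_
  push_cast
  field_simp
  linear_combination -g z * hfh

theorem solvesHamiltonianSystemAt_of_hirota {α : 𝕜} {f g h : 𝕜[X]}
    (toda : f * h = derivative (derivative g) * g - derivative g ^ 2 + X * g ^ 2)
    (hfg : hirotaSq derivative' f g = 0) (hfh : hirota derivative' f h = C (2 * α) * g ^ 2)
    {z : 𝕜} (hfz : f.eval z ≠ 0) (hgz : g.eval z ≠ 0) :
    SolvesHamiltonianSystemAt α
      (fun y => (derivative f).eval y / f.eval y - (derivative g).eval y / g.eval y)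
      (fun y => 2 * y + 2 * ((derivative (derivative g)).eval y * g.eval y -
        (derivative g).eval y ^ 2) / g.eval y ^ 2) z := by
  have hw {y : 𝕜} (hy : g.eval y ≠ 0) : 2 * y + 2 * ((derivative (derivative g)).eval y * g.eval y -
      (derivative g).eval y ^ 2) / g.eval y ^ 2 = 2 * (f.eval y * h.eval y / g.eval y ^ 2) := by
    have toda_y := congrArg (eval y) toda
    simp only [eval_add, eval_sub, eval_mul, eval_pow, eval_X] at toda_y
    rw [toda_y]
    field_simp
    ring
  constructor
  · have hfg_z := congrArg (eval z) hfg
    simp only [hirotaSq, derivative'_apply, eval_add, eval_sub, eval_mul, eval_ofNat, eval_zero]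
      at hfg_z
    refine (hasDerivAt_logDeriv_sub_logDeriv (f.hasDerivAt z) ((derivative f).hasDerivAt z)
      (g.hasDerivAt z) ((derivative g).hasDerivAt z) hfz hgz hfg_z).congr_deriv ?_
    ring
  · have hfh_z := congrArg (eval z) hfh
    simp only [hirota, derivative'_apply, eval_sub, eval_mul, eval_pow, eval_C] at hfh_z
    have hw_near : ∀ᶠ y in 𝓝 z, g.eval y ≠ 0 := g.continuous.continuousAt.eventually_ne hgz
    refine (((hasDerivAt_mul_div_sq (f.hasDerivAt z) (g.hasDerivAt z) (h.hasDerivAt z) hfz hgz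
      hfh_z).const_mul 2).congr_deriv ?_).congr_of_eventuallyEq (hw_near.mono fun y hy => hw hy)
    rw [hw hgz]
    ring

end Painleve

section HankelPolynomials

/-- The polynomials `a_n` of the theorem. The sum runs over `Fin n` because the recursion needs the
bound `k < n` to terminate. -/
noncomputable def hankelPoly (R : Type*) [CommSemiring R] : ℕ → R[X]
  | 0 => X
  | n + 1 => derivative (hankelPoly R n) +
      ∑ k : Fin n, hankelPoly R k * hankelPoly R (n - 1 - k)
termination_by n => n
decreasing_by all_goals omega

theorem hankelPoly_succ (R : Type*) [CommSemiring R] (n : ℕ) :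
    hankelPoly R (n + 1) = derivative (hankelPoly R n) +
      ∑ k ∈ Finset.range n, hankelPoly R k * hankelPoly R (n - 1 - k) := by
  rw [hankelPoly, Finset.sum_range]

theorem isRiccatiSeq_hankelPoly (R : Type*) [CommRing R] :
    IsRiccatiSeq (derivative' : Derivation R R[X] R[X]) (hankelPoly R) :=
  hankelPoly_succ R

variable {𝕜 : Type*} [NontriviallyNormedField 𝕜]

theorem eq_eval_hankelPoly {a : ℕ → 𝕜 → 𝕜} (ha_zero : a 0 = fun z => z)
    (ha_rec : ∀ n, a (n + 1) = fun z =>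
      deriv (a n) z + ∑ k ∈ Finset.range n, a k z * a (n - 1 - k) z) (n : ℕ) :
    a n = fun z => (hankelPoly 𝕜 n).eval z := by
  induction n using Nat.strong_induction_on with
  | _ n ih =>
    rcases n with _ | n
    · simp [ha_zero, hankelPoly]
    · ext1 z
      simp only [ha_rec, hankelPoly_succ, eval_add, eval_finsetSum, ih n n.lt_succ_self,
        Polynomial.deriv]
      congr 1
      refine Finset.sum_congr rfl fun k hk => ?_
      have hk_lt := Finset.mem_range.1 hk
      rw [ih k (by omega), ih (n - 1 - k) (by omega), eval_mul]

theorem solvesHamiltonianSystemAt_hankelDet [CharZero 𝕜] (N : ℕ) {z : 𝕜}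
    (hN : (hankelDet (hankelPoly 𝕜) N).eval z ≠ 0)
    (hN1 : (hankelDet (hankelPoly 𝕜) (N + 1)).eval z ≠ 0) :
    let f := hankelDet (hankelPoly 𝕜) (N + 1)
    let g := hankelDet (hankelPoly 𝕜) N
    SolvesHamiltonianSystemAt ((N : 𝕜) + 1 / 2)
      (fun y => (derivative f).eval y / f.eval y - (derivative g).eval y / g.eval y)
      (fun y => 2 * y + 2 * ((derivative (derivative g)).eval y * g.eval y -
        (derivative g).eval y ^ 2) / g.eval y ^ 2) z := by
  have chain := (isRiccatiSeq_hankelPoly 𝕜).isTodaChain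
  rw [hankelPoly] at chain
  obtain ⟨-, hfg, hfh⟩ := chain.hirota_equations derivative_X N
  have const : C (2 * ((N : 𝕜) + 1 / 2)) = 2 * N + 1 := by
    rw [mul_add, mul_one_div_cancel two_ne_zero, map_add, map_mul, map_ofNat, map_natCast, map_one]
  rw [← const] at hfh
  exact solvesHamiltonianSystemAt_of_hirota (chain.toda N) hfg hfh hN1 hN

end HankelPolynomials

theorem rational_hankel_determinant_solutions_general {𝕜 : Type*} [NontriviallyNormedField 𝕜]
    [CharZero 𝕜] (a : ℕ → 𝕜 → 𝕜) (ha_zero : a 0 = fun z => z)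
    (ha_rec : ∀ n : ℕ, a (n + 1) = fun z =>
      deriv (a n) z + ∑ k ∈ Finset.range n, a k z * a (n - 1 - k) z)
    (κ : ℕ → 𝕜 → 𝕜)
    (hκ : ∀ N : ℕ, κ N = fun z =>
      Matrix.det (Matrix.of fun i j : Fin N => a ((i : ℕ) + (j : ℕ)) z))
    (N : ℕ) {z : 𝕜} (hκN_ne : κ N z ≠ 0) (hκN1_ne : κ (N + 1) z ≠ 0) (u W : 𝕜 → 𝕜)
    (hu : u = fun z => deriv (κ (N + 1)) z / κ (N + 1) z - deriv (κ N) z / κ N z)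
    (hW : W = fun z => 2 * z +
      2 * (deriv (deriv (κ N)) z * κ N z - (deriv (κ N) z) ^ 2) / (κ N z) ^ 2) :
    (deriv (deriv u) z = 2 * (u z) ^ 3 - 4 * z * u z + 4 * (((N : 𝕜) + 1 / 2) + 1 / 2)) ∧
      (2 * W z * deriv (deriv W) z - (deriv W z) ^ 2 + 4 * (W z) ^ 3
        - 8 * z * (W z) ^ 2 + 16 * ((N : 𝕜) + 1 / 2) ^ 2 = 0) := by
  have κ_eq (n : ℕ) : κ n = fun y => (hankelDet (hankelPoly 𝕜) n).eval y := by
    ext1 y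
    simp only [hκ, eq_eval_hankelPoly ha_zero ha_rec]
    exact (map_hankelDet (evalRingHom y) (hankelPoly 𝕜) n).symm
  have deriv_eval (q : 𝕜[X]) : deriv (fun y => q.eval y) = fun y => (derivative q).eval y :=
    funext fun _ => q.deriv
  simp only [κ_eq, deriv_eval] at hκN_ne hκN1_ne hu hW
  have system : ∀ᶠ y in 𝓝 z, SolvesHamiltonianSystemAt ((N : 𝕜) + 1 / 2) u W y := by
    filter_upwards [(Polynomial.continuous _).continuousAt.eventually_ne hκN_ne,
      (Polynomial.continuous _).continuousAt.eventually_ne hκN1_ne] with y hN hN1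
    rw [hu, hW]
    exact solvesHamiltonianSystemAt_hankelDet N hN hN1
  refine ⟨(painleveII_of_hamiltonianSystem system).trans ?_,
    painleveXXXIV_of_hamiltonianSystem system⟩
  ring

/-- Rational Hankel determinant solutions: with the polynomials `a_n` defined by
`a_0 = z`, `a_n = a_{n-1}' + Σ_{k=0}^{n-2} a_k a_{n-k-2}` and the Hankel determinants
`κ_N = det(a_{i+j-2})_{1≤i,j≤N}` (`κ_0 = 1`), on any open interval `I` where `κ_N` and
`κ_{N+1}` are nowhere zero, `u = (log (κ_{N+1}/κ_N))'` solves P_II[N + 1/2] and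
`W = 2z + 2 (log κ_N)''` solves P_XXXIV[N + 1/2]. -/
theorem rational_hankel_determinant_solutions
    (a : ℕ → ℝ → ℝ)
    (ha_zero : a 0 = fun z => z)
    (ha_rec : ∀ n : ℕ, a (n + 1) = fun z =>
      deriv (a n) z + ∑ k ∈ Finset.range n, a k z * a (n - 1 - k) z)
    (κ : ℕ → ℝ → ℝ)
    (hκ : ∀ N : ℕ, κ N = fun z =>
      Matrix.det (Matrix.of fun i j : Fin N => a ((i : ℕ) + (j : ℕ)) z))
    (I : Set ℝ) (hIopen : IsOpen I) (hIconn : I.OrdConnected)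
    (N : ℕ)
    (hκN_ne : ∀ z ∈ I, κ N z ≠ 0)
    (hκN1_ne : ∀ z ∈ I, κ (N + 1) z ≠ 0)
    (u W : ℝ → ℝ)
    (hu : u = fun z => deriv (κ (N + 1)) z / κ (N + 1) z - deriv (κ N) z / κ N z)
    (hW : W = fun z => 2 * z +
      2 * (deriv (deriv (κ N)) z * κ N z - (deriv (κ N) z) ^ 2) / (κ N z) ^ 2) :
    ∀ z ∈ I,
      (deriv (deriv u) z = 2 * (u z) ^ 3 - 4 * z * u z + 4 * (((N : ℝ) + 1 / 2) + 1 / 2)) ∧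
      (2 * W z * deriv (deriv W) z - (deriv W z) ^ 2 + 4 * (W z) ^ 3
        - 8 * z * (W z) ^ 2 + 16 * ((N : ℝ) + 1 / 2) ^ 2 = 0) :=
  fun z hz => rational_hankel_determinant_solutions_general a ha_zero ha_rec κ hκ N
    (hκN_ne z hz) (hκN1_ne z hz) u W hu hW
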